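/- For every ε > 0 there is a constant C_ε such that every finite set Λ ⊂ P¹ = {(t, t²) : |t| ≤ 1/2} ⊂ ℝ² satisfies E₃(Λ) ≤ C_ε · |Λ|^{7/2+ε}. -/

import Mathlib

/-!
On the parabola, an equality of two sums of `k` points says that two real `k`-tuples have the same
sum and the same sum of squares. Sort the triples: if two distinct sorted triples have the same
power sums, then neither majorizes the other, so their smallest and their largest entries are
strictly ordered in the same direction.

Cut the `N` abscissae into consecutive blocks of length `w` and restrict to pairs of triples for
which the block indices of the two extreme entries have the same total; by Cauchy–Schwarz this costs
a factor `O(N / w)`. Because the extremes move in the same direction, both now stay in their blocks.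
A nontrivial pair of triples is determined by its four extreme entries, for which there are at most
`(N w)²` choices, and there are at most `N³` trivial pairs. Taking `w ≈ √N` gives
`O(√N) · (N³ + N² w²) = O(N^{7/2})`.
-/

open MeasureTheory Real

noncomputable section

/-- The `k`-energy of a set `Λ`: the number of `2k`-tuples `(λ₁,…,λ₂ₖ) ∈ Λ^{2k}` with
`λ₁ + ⋯ + λ_k = λ_{k+1} + ⋯ + λ_{2k}`. -/
def energy {E : Type*} [AddCommMonoid E] (k : ℕ) (Λ : Set E) : ℕ :=
  Nat.card {fg : (Fin k → E) × (Fin k → E) //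
    (∀ i, fg.1 i ∈ Λ) ∧ (∀ i, fg.2 i ∈ Λ) ∧ ∑ i, fg.1 i = ∑ i, fg.2 i}

/-- The truncated parabola `P¹ ⊂ ℝ²`. -/
def parab1 : Set (ℝ × ℝ) := {p | |p.1| ≤ 1 / 2 ∧ p.2 = p.1 ^ 2}


open Finset

section Coincidences

variable {α β γ : Type*} [DecidableEq β] [DecidableEq γ]

/-- The pairs of elements of `T` on which `φ` takes the same value. Energies are cardinalities of
such sets, with `φ` the sum of the entries of a tuple. -/
def coincidences (φ : α → β) (T : Finset α) : Finset (α × α) :=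
  {r ∈ T ×ˢ T | φ r.1 = φ r.2}

lemma mem_coincidences {φ : α → β} {T : Finset α} {r : α × α} :
    r ∈ coincidences φ T ↔ (r.1 ∈ T ∧ r.2 ∈ T) ∧ φ r.1 = φ r.2 := by
  simp [coincidences]

lemma card_coincidences_eq_sum_card {φ : α → β} (T : Finset α) :
    #(coincidences φ T) = ∑ p ∈ T, #{q ∈ T | φ q = φ p} := by
  simp only [coincidences, card_filter, sum_product, eq_comm]

lemma card_coincidences_eq_sum_card_sq {φ : α → β} {T : Finset α} {B : Finset β}
    (hφ : Set.MapsTo φ T B) :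
    #(coincidences φ T) = ∑ b ∈ B, #{p ∈ T | φ p = b} ^ 2 := by
  rw [card_coincidences_eq_sum_card, ← sum_fiberwise_of_maps_to hφ]
  refine sum_congr rfl fun b _ => ?_
  calc ∑ p ∈ T with φ p = b, #{q ∈ T | φ q = φ p}
      = ∑ p ∈ T with φ p = b, #{q ∈ T | φ q = b} :=
        sum_congr rfl fun p hp => by rw [(mem_filter.1 hp).2]
    _ = #{p ∈ T | φ p = b} ^ 2 := by rw [sum_const, smul_eq_mul, sq]

lemma card_coincidences_le_card_mul {φ : α → β} {T : Finset α} {w : ℕ}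
    (hw : ∀ b, #{p ∈ T | φ p = b} ≤ w) : #(coincidences φ T) ≤ #T * w := by
  rw [card_coincidences_eq_sum_card]
  exact sum_le_card_nsmul T _ w fun p _ => hw (φ p)

lemma card_coincidences_eq_card_add_card_offDiag (φ : α → β) (T : Finset α) :
    #(coincidences φ T) = #T + #{r ∈ T.offDiag | φ r.1 = φ r.2} := by
  classical
  have hdiag : {r ∈ T.diag | φ r.1 = φ r.2} = T.diag :=
    filter_true_of_mem fun r hr => congrArg φ (mem_diag.1 hr).2
  rw [coincidences, ← diag_union_offDiag, filter_union, hdiag,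
    card_union_of_disjoint ((disjoint_diag_offDiag T).mono_right (filter_subset _ _)), diag_card]

/-- Cauchy–Schwarz on each fibre of `φ`, split into the classes of `c`. -/
lemma card_coincidences_le_card_mul_card_coincidences_prodMk {c : α → γ} {T : Finset α}
    {G : Finset γ} (φ : α → β) (hc : Set.MapsTo c T G) :
    #(coincidences φ T) ≤ #G * #(coincidences (fun p => (φ p, c p)) T) := by
  have hφ : Set.MapsTo φ T (T.image φ) := fun p hp => mem_image_of_mem φ hp
  have hφc : Set.MapsTo (fun p => (φ p, c p)) T ((T.image φ ×ˢ G : Finset (β × γ)) : Set _) :=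
    fun p hp => mem_product.2 ⟨hφ hp, hc hp⟩
  rw [card_coincidences_eq_sum_card_sq hφ, card_coincidences_eq_sum_card_sq hφc, sum_product,
    mul_sum]
  refine sum_le_sum fun b _ => ?_
  have hsplit : #{p ∈ T | φ p = b} = ∑ g ∈ G, #{p ∈ T | (φ p, c p) = (b, g)} := by
    simp only [Prod.mk.injEq, ← filter_filter]
    exact card_eq_sum_card_fiberwise fun p hp => hc (mem_filter.1 hp).1
  rw [hsplit]
  exact sq_sum_le_card_mul_sum_sq

lemma card_coincidences_le_of_injOn {α' β' : Type*} [DecidableEq β'] {φ : α → β} {ψ : α' → β'}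
    {T : Finset α} {T' : Finset α'} (e : α → α') (he : Set.MapsTo e T T') (hinj : Set.InjOn e T)
    (hφψ : ∀ p ∈ T, ∀ q ∈ T, φ p = φ q → ψ (e p) = ψ (e q)) :
    #(coincidences φ T) ≤ #(coincidences ψ T') := by
  refine card_le_card_of_injOn (Prod.map e e) (fun r hr => ?_) fun r hr s hs h => ?_
  · obtain ⟨⟨h₁, h₂⟩, hφ⟩ := mem_coincidences.1 hr
    exact mem_coincidences.2 ⟨⟨he h₁, he h₂⟩, hφψ _ h₁ _ h₂ hφ⟩
  · obtain ⟨⟨hr₁, hr₂⟩, -⟩ := mem_coincidences.1 hr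
    obtain ⟨⟨hs₁, hs₂⟩, -⟩ := mem_coincidences.1 hs
    obtain ⟨h₁, h₂⟩ := Prod.ext_iff.1 h
    exact Prod.ext (hinj hr₁ hs₁ h₁) (hinj hr₂ hs₂ h₂)

lemma energy_coe_eq_card_coincidences {E : Type*} [AddCommMonoid E] [DecidableEq E] (k : ℕ)
    (Λ : Finset E) :
    energy k (Λ : Set E) =
      #(coincidences (fun f => ∑ i, f i) (Fintype.piFinset fun _ : Fin k => Λ)) := by
  refine Nat.subtype_card _ fun r => ?_
  simp only [mem_coincidences, Fintype.mem_piFinset, mem_coe, and_assoc]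

end Coincidences

section SortedTuples

variable {α : Type*} [Preorder α]

open scoped Classical in
/-- The monotone `n`-tuples with entries in `A`, representing the multisets of size `n`. -/
def sortedTuples (n : ℕ) (A : Finset α) : Finset (Fin n → α) :=
  {p ∈ Fintype.piFinset fun _ => A | Monotone p}

lemma mem_sortedTuples {n : ℕ} {A : Finset α} {p : Fin n → α} :
    p ∈ sortedTuples n A ↔ (∀ i, p i ∈ A) ∧ Monotone p := by
  simp [sortedTuples]

lemma card_sortedTuples_le (n : ℕ) (A : Finset α) : #(sortedTuples n A) ≤ #A ^ n :=
  (card_le_card fun _ hp => Fintype.mem_piFinset.2 (mem_sortedTuples.1 hp).1).trans_eq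
    (Fintype.card_piFinset_const A n)

end SortedTuples

section LinearOrder

variable {α : Type*} [LinearOrder α]

lemma card_coincidences_piFinset_le {β : Type*} [DecidableEq β] {n : ℕ} {φ : (Fin n → α) → β}
    (hφ : ∀ p, ∀ σ : Equiv.Perm (Fin n), φ (p ∘ σ) = φ p) (A : Finset α) :
    #(coincidences φ (Fintype.piFinset fun _ => A)) ≤
      n.factorial ^ 2 * #(coincidences φ (sortedTuples n A)) := by
  let perms : Finset (Equiv.Perm (Fin n)) := univ
  have hperms : #perms = n.factorial := by simp [perms, Fintype.card_perm]
  rw [← hperms, sq, ← card_product, ← card_product]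
  refine card_le_card_of_injOn
    (fun r => ((Tuple.sort r.1, Tuple.sort r.2), (r.1 ∘ Tuple.sort r.1, r.2 ∘ Tuple.sort r.2)))
    (fun r hr => ?_) ?_
  · obtain ⟨⟨h₁, h₂⟩, h⟩ := mem_coincidences.1 hr
    rw [Fintype.mem_piFinset] at h₁ h₂
    refine mem_product.2 ⟨mem_univ _, mem_coincidences.2 ⟨⟨?_, ?_⟩, ?_⟩⟩
    · exact mem_sortedTuples.2 ⟨fun i => h₁ _, Tuple.monotone_sort _⟩
    · exact mem_sortedTuples.2 ⟨fun i => h₂ _, Tuple.monotone_sort _⟩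
    · simpa only [hφ] using h
  · rintro ⟨p, q⟩ - ⟨p', q'⟩ - h
    simp only [Prod.mk.injEq] at h
    obtain ⟨⟨hσ, hτ⟩, hp, hq⟩ := h
    rw [← hσ] at hp
    rw [← hτ] at hq
    exact Prod.ext ((Tuple.sort p).surjective.injective_comp_right hp)
      ((Tuple.sort q).surjective.injective_comp_right hq)

/-- The rank of `x` in `A`: the number of elements of `A` strictly below `x`. -/
def countBelow (A : Finset α) (x : α) : ℕ := #{a ∈ A | a < x}

lemma monotone_countBelow (A : Finset α) : Monotone (countBelow A) := fun _ _ h =>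
  card_le_card (monotone_filter_right A fun _ _ ha => ha.trans_le h)

lemma strictMonoOn_countBelow (A : Finset α) : StrictMonoOn (countBelow A) A := fun x hx y _ h =>
  card_lt_card <| (ssubset_iff_of_subset
    (monotone_filter_right A fun _ _ ha => ha.trans h)).2 ⟨x, mem_filter.2 ⟨hx, h⟩, by simp⟩

lemma exists_monotone_card_fiber_le (A : Finset α) {w : ℕ} (hw : 0 < w) :
    ∃ b : α → ℕ, Monotone b ∧ (∀ x, b x ≤ #A / w) ∧ ∀ m, #{x ∈ A | b x = m} ≤ w := by
  refine ⟨fun x => countBelow A x / w,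
    fun x y h => Nat.div_le_div_right (monotone_countBelow A h),
    fun x => Nat.div_le_div_right (card_filter_le _ _), fun m => ?_⟩
  calc #{x ∈ A | countBelow A x / w = m}
      ≤ #(Ico (m * w) (m * w + w)) := by
        refine card_le_card_of_injOn (countBelow A) (fun x hx => ?_)
          ((strictMonoOn_countBelow A).injOn.mono (filter_subset _ A))
        have := (Nat.div_eq_iff hw).1 (mem_filter.1 hx).2
        exact mem_Ico.2 (by omega)
    _ = w := by simp

end LinearOrder

section PowerSums

/-- The first two power sums of a tuple: the sum of the points of the parabola `y = x ^ 2` whose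
abscissae are the entries. -/
def powerSums {R : Type*} [CommSemiring R] {n : ℕ} (p : Fin n → R) : R × R :=
  (∑ i, p i, ∑ i, p i ^ 2)

lemma powerSums_comp_perm {R : Type*} [CommSemiring R] {n : ℕ} (p : Fin n → R)
    (σ : Equiv.Perm (Fin n)) : powerSums (p ∘ σ) = powerSums p :=
  Prod.ext (Equiv.sum_comp σ p) (Equiv.sum_comp σ fun i => p i ^ 2)

lemma powerSums_fst_comp {R : Type*} [CommSemiring R] {n : ℕ} {f : Fin n → R × R}
    (hf : ∀ i, (f i).2 = (f i).1 ^ 2) : powerSums (Prod.fst ∘ f) = ∑ i, f i := by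
  ext <;> simp [powerSums, Prod.fst_sum, Prod.snd_sum, hf]

lemma energy_le_card_coincidences_powerSums {R : Type*} [CommSemiring R] [DecidableEq R]
    (k : ℕ) {Λ : Finset (R × R)} (hΛ : ∀ v ∈ Λ, v.2 = v.1 ^ 2) :
    energy k (Λ : Set (R × R)) ≤
      #(coincidences powerSums (Fintype.piFinset fun _ : Fin k => Λ.image Prod.fst)) := by
  rw [energy_coe_eq_card_coincidences]
  refine card_coincidences_le_of_injOn (Prod.fst ∘ ·) (fun f hf => ?_) (fun f hf g hg hfg => ?_)
    fun f hf g hg hfg => ?_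
  · exact Fintype.mem_piFinset.2 fun i => mem_image_of_mem _ (Fintype.mem_piFinset.1 hf i)
  · ext i : 1
    have hi : (f i).1 = (g i).1 := congrFun hfg i
    refine Prod.ext hi ?_
    rw [hΛ _ (Fintype.mem_piFinset.1 hf i), hΛ _ (Fintype.mem_piFinset.1 hg i), hi]
  · rw [Fintype.mem_piFinset] at hf hg
    rwa [powerSums_fst_comp fun i => hΛ _ (hf i), powerSums_fst_comp fun i => hΛ _ (hg i)]

lemma powerSums_fin_three_eq_iff {R : Type*} [CommSemiring R] {p q : Fin 3 → R} :
    powerSums p = powerSums q ↔ p 0 + p 1 + p 2 = q 0 + q 1 + q 2 ∧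
      p 0 ^ 2 + p 1 ^ 2 + p 2 ^ 2 = q 0 ^ 2 + q 1 ^ 2 + q 2 ^ 2 := by
  simp [powerSums, Fin.sum_univ_three]

lemma funext_fin_three {α : Type*} {p q : Fin 3 → α} (h₀ : p 0 = q 0) (h₁ : p 1 = q 1)
    (h₂ : p 2 = q 2) : p = q := by
  ext i
  fin_cases i <;> assumption

lemma eq_and_eq_of_sub_eq_of_sq_sub_sq_eq {R : Type*} [CommRing R] [IsDomain R] [NeZero (2 : R)]
    {u v u' v' : R} (huv : u ≠ v) (h : u - v = u' - v') (hsq : u ^ 2 - v ^ 2 = u' ^ 2 - v' ^ 2) :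
    u = u' ∧ v = v' := by
  have hadd : u + v = u' + v' := by
    refine mul_left_cancel₀ (sub_ne_zero.2 huv) ?_
    linear_combination hsq - (u' + v') * h
  have hu : u = u' := mul_left_cancel₀ (two_ne_zero : (2 : R) ≠ 0) (by linear_combination hadd + h)
  exact ⟨hu, by linear_combination hadd - hu⟩

variable {R : Type*} [CommRing R] [LinearOrder R] [IsStrictOrderedRing R]

/-- Otherwise `p` strictly majorizes `q`, and strict convexity makes its sum of squares larger. -/
lemma eq_of_powerSums_eq_of_ends_nested {p q : Fin 3 → R} (hq : Monotone q)
    (h : powerSums p = powerSums q) (h₀ : p 0 ≤ q 0) (h₂ : q 2 ≤ p 2) : p = q := by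
  obtain ⟨hsum, hsq⟩ := powerSums_fin_three_eq_iff.1 h
  have hq₀₁ : q 0 ≤ q 1 := hq (by decide)
  have hq₁₂ : q 1 ≤ q 2 := hq (by decide)
  have hexcess : 2 * ((q 0 - p 0) * (q 1 - q 0)) + 2 * ((p 2 - q 2) * (q 2 - q 1)) +
      ((q 0 - p 0) ^ 2 + (p 1 - q 1) ^ 2 + (p 2 - q 2) ^ 2) = 0 := by
    linear_combination hsq - 2 * q 1 * hsum
  have hleft : 0 ≤ (q 0 - p 0) * (q 1 - q 0) :=
    mul_nonneg (sub_nonneg.2 h₀) (sub_nonneg.2 hq₀₁)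
  have hright : 0 ≤ (p 2 - q 2) * (q 2 - q 1) :=
    mul_nonneg (sub_nonneg.2 h₂) (sub_nonneg.2 hq₁₂)
  have h₀' : q 0 - p 0 = 0 := by
    refine pow_eq_zero_iff two_ne_zero |>.1 (le_antisymm ?_ (sq_nonneg _))
    linarith [sq_nonneg (p 1 - q 1), sq_nonneg (p 2 - q 2)]
  have h₂' : p 2 - q 2 = 0 := by
    refine pow_eq_zero_iff two_ne_zero |>.1 (le_antisymm ?_ (sq_nonneg _))
    linarith [sq_nonneg (q 0 - p 0), sq_nonneg (p 1 - q 1)]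
  exact funext_fin_three (by linarith) (by linarith) (by linarith)

lemma ends_lt_or_gt_of_powerSums_eq {p q : Fin 3 → R} (hp : Monotone p) (hq : Monotone q)
    (hpq : p ≠ q) (h : powerSums p = powerSums q) :
    (p 0 < q 0 ∧ p 2 < q 2) ∨ (q 0 < p 0 ∧ q 2 < p 2) := by
  have hp_not_outside : ¬(p 0 ≤ q 0 ∧ q 2 ≤ p 2) := fun h' =>
    hpq (eq_of_powerSums_eq_of_ends_nested hq h h'.1 h'.2)
  have hq_not_outside : ¬(q 0 ≤ p 0 ∧ p 2 ≤ q 2) := fun h' =>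
    hpq (eq_of_powerSums_eq_of_ends_nested hp h.symm h'.1 h'.2).symm
  grind

lemma middle_ne_of_powerSums_eq {p q : Fin 3 → R} (hp : Monotone p) (hq : Monotone q)
    (hpq : p ≠ q) (h : powerSums p = powerSums q) : p 1 ≠ q 1 := by
  intro h₁
  have hsum := (powerSums_fin_three_eq_iff.1 h).1
  rcases ends_lt_or_gt_of_powerSums_eq hp hq hpq h with ⟨h₀, h₂⟩ | ⟨h₀, h₂⟩ <;> linarith

lemma eq_and_eq_of_powerSums_eq_of_ends_eq {p q p' q' : Fin 3 → R} (hp : Monotone p)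
    (hq : Monotone q) (hpq : p ≠ q) (h : powerSums p = powerSums q)
    (h' : powerSums p' = powerSums q') (hp₀ : p 0 = p' 0) (hq₀ : q 0 = q' 0) (hp₂ : p 2 = p' 2)
    (hq₂ : q 2 = q' 2) : p = p' ∧ q = q' := by
  obtain ⟨hsum, hsq⟩ := powerSums_fin_three_eq_iff.1 h
  obtain ⟨hsum', hsq'⟩ := powerSums_fin_three_eq_iff.1 h'
  rw [← hp₀, ← hq₀, ← hp₂, ← hq₂] at hsum' hsq'
  obtain ⟨hp₁, hq₁⟩ : p 1 = p' 1 ∧ q 1 = q' 1 :=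
    eq_and_eq_of_sub_eq_of_sq_sub_sq_eq (middle_ne_of_powerSums_eq hp hq hpq h)
      (by linear_combination hsum - hsum') (by linear_combination hsq - hsq')
  exact ⟨funext_fin_three hp₀ hp₁ hp₂, funext_fin_three hq₀ hq₁ hq₂⟩

/-- The power sums of a triple, refined by the total block index of its first and last entries,
where `b` sends an entry to the index of its block. -/
def blockedPowerSums (b : R → ℕ) (p : Fin 3 → R) : (R × R) × ℕ :=
  (powerSums p, b (p 0) + b (p 2))

lemma block_eq_of_blockedPowerSums_eq {b : R → ℕ} (hb : Monotone b) {p q : Fin 3 → R}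
    (hp : Monotone p) (hq : Monotone q) (h : blockedPowerSums b p = blockedPowerSums b q) :
    b (p 0) = b (q 0) ∧ b (p 2) = b (q 2) := by
  obtain ⟨hpow, hblock⟩ : powerSums p = powerSums q ∧ b (p 0) + b (p 2) = b (q 0) + b (q 2) :=
    Prod.ext_iff.1 h
  rcases eq_or_ne p q with rfl | hpq
  · exact ⟨rfl, rfl⟩
  rcases ends_lt_or_gt_of_powerSums_eq hp hq hpq hpow with ⟨h₀, h₂⟩ | ⟨h₀, h₂⟩ <;>
  · have := hb h₀.le
    have := hb h₂.le
    omega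

lemma card_offDiag_blockedPowerSums_eq_le {b : R → ℕ} (hb : Monotone b) (A : Finset R) :
    #{r ∈ (sortedTuples 3 A).offDiag | blockedPowerSums b r.1 = blockedPowerSums b r.2} ≤
      #(coincidences b A) ^ 2 := by
  rw [sq, ← card_product]
  refine card_le_card_of_injOn (fun r => ((r.1 0, r.2 0), (r.1 2, r.2 2))) ?_ ?_
  · rintro ⟨p, q⟩ hr
    simp only [coe_filter, mem_offDiag, Set.mem_ofPred_eq, mem_sortedTuples] at hr
    obtain ⟨⟨⟨hpA, hp⟩, ⟨hqA, hq⟩, -⟩, h⟩ := hr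
    obtain ⟨h₀, h₂⟩ := block_eq_of_blockedPowerSums_eq hb hp hq h
    exact mem_product.2 ⟨mem_coincidences.2 ⟨⟨hpA 0, hqA 0⟩, h₀⟩,
      mem_coincidences.2 ⟨⟨hpA 2, hqA 2⟩, h₂⟩⟩
  · rintro ⟨p, q⟩ hr ⟨p', q'⟩ hr' hends
    simp only [coe_filter, mem_offDiag, Set.mem_ofPred_eq, mem_sortedTuples] at hr hr'
    obtain ⟨⟨⟨-, hp⟩, ⟨-, hq⟩, hpq⟩, h⟩ := hr
    simp only [Prod.mk.injEq] at hends
    obtain ⟨⟨hp₀, hq₀⟩, hp₂, hq₂⟩ := hends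
    exact Prod.ext_iff.2 (eq_and_eq_of_powerSums_eq_of_ends_eq hp hq hpq (congrArg Prod.fst h)
      (congrArg Prod.fst hr'.2) hp₀ hq₀ hp₂ hq₂)

lemma card_coincidences_powerSums_sortedTuples_le (A : Finset R) {w : ℕ} (hw : 0 < w) :
    #(coincidences powerSums (sortedTuples 3 A)) ≤
      (2 * (#A / w) + 1) * (#A ^ 3 + (#A * w) ^ 2) := by
  obtain ⟨b, hb, hb_le, hb_card⟩ := exists_monotone_card_fiber_le A hw
  have hblocks : Set.MapsTo (fun p : Fin 3 → R => b (p 0) + b (p 2)) (sortedTuples 3 A)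
      (range (2 * (#A / w) + 1)) := fun p _ =>
    mem_range.2 <| Nat.lt_succ_of_le <| (add_le_add (hb_le (p 0)) (hb_le (p 2))).trans_eq
      (two_mul _).symm
  calc #(coincidences powerSums (sortedTuples 3 A))
      ≤ (2 * (#A / w) + 1) * #(coincidences (blockedPowerSums b) (sortedTuples 3 A)) := by
        rw [← card_range (2 * (#A / w) + 1)]
        exact card_coincidences_le_card_mul_card_coincidences_prodMk powerSums hblocks
    _ ≤ (2 * (#A / w) + 1) * (#A ^ 3 + #(coincidences b A) ^ 2) := by
        rw [card_coincidences_eq_card_add_card_offDiag]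
        gcongr
        · exact card_sortedTuples_le 3 A
        · exact card_offDiag_blockedPowerSums_eq_le hb A
    _ ≤ (2 * (#A / w) + 1) * (#A ^ 3 + (#A * w) ^ 2) := by
        gcongr
        exact card_coincidences_le_card_mul hb_card

lemma card_coincidences_powerSums_sortedTuples_le_sqrt (A : Finset R) :
    #(coincidences powerSums (sortedTuples 3 A)) ≤ 14 * (#A ^ 3 * Nat.sqrt #A) := by
  rcases A.card.eq_zero_or_pos with hA | hA
  · simpa [hA] using card_coincidences_powerSums_sortedTuples_le A one_pos
  set N := #A
  set w := Nat.sqrt N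
  have hw : 0 < w := Nat.sqrt_pos.2 hA
  have hdiv : N / w ≤ w + 2 :=
    Nat.div_le_of_le_mul (by linarith [Nat.sqrt_le_add N])
  calc #(coincidences powerSums (sortedTuples 3 A))
      ≤ (2 * (N / w) + 1) * (N ^ 3 + (N * w) ^ 2) :=
        card_coincidences_powerSums_sortedTuples_le A hw
    _ ≤ (7 * w) * (N ^ 3 + N ^ 2 * N) := by
        rw [mul_pow]
        gcongr
        · omega
        · exact Nat.sqrt_le' N
    _ = 14 * (N ^ 3 * w) := by ring

theorem energy_three_le_of_subset_parabola {Λ : Finset (R × R)} (hΛ : ∀ v ∈ Λ, v.2 = v.1 ^ 2) :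
    energy 3 (Λ : Set (R × R)) ≤ 504 * (#Λ ^ 3 * Nat.sqrt #Λ) := by
  set A := Λ.image Prod.fst
  have hA : #A ≤ #Λ := card_image_le
  calc energy 3 (Λ : Set (R × R))
      ≤ #(coincidences powerSums (Fintype.piFinset fun _ : Fin 3 => A)) :=
        energy_le_card_coincidences_powerSums 3 hΛ
    _ ≤ (Nat.factorial 3) ^ 2 * #(coincidences powerSums (sortedTuples 3 A)) :=
        card_coincidences_piFinset_le powerSums_comp_perm A
    _ ≤ 36 * (14 * (#A ^ 3 * Nat.sqrt #A)) :=
        Nat.mul_le_mul_left 36 (card_coincidences_powerSums_sortedTuples_le_sqrt A)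
    _ ≤ 36 * (14 * (#Λ ^ 3 * Nat.sqrt #Λ)) := by
        gcongr
    _ = 504 * (#Λ ^ 3 * Nat.sqrt #Λ) := by ring

theorem additive_energy_parabola_general {Λ : Set (R × R)} (hfin : Λ.Finite)
    (hΛ : ∀ v ∈ Λ, v.2 = v.1 ^ 2) :
    (energy 3 Λ : ℝ) ≤ 504 * (Λ.ncard : ℝ) ^ ((7 : ℝ) / 2) := by
  lift Λ to Finset (R × R) using hfin
  rw [Set.ncard_coe_finset]
  calc (energy 3 (Λ : Set (R × R)) : ℝ)
      ≤ 504 * ((#Λ : ℝ) ^ 3 * Nat.sqrt #Λ) := by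
        exact_mod_cast energy_three_le_of_subset_parabola hΛ
    _ ≤ 504 * ((#Λ : ℝ) ^ 3 * √(#Λ : ℝ)) := by
        gcongr
        exact Real.nat_sqrt_le_real_sqrt
    _ = 504 * (#Λ : ℝ) ^ ((7 : ℝ) / 2) := by
        rw [Real.sqrt_eq_rpow, ← Real.rpow_natCast, ← Real.rpow_add_of_nonneg (by positivity)
          (by positivity) (by positivity)]
        norm_num

end PowerSums

lemma natCast_rpow_le_natCast_rpow (n : ℕ) {a b : ℝ} (ha : 0 < a) (hab : a ≤ b) :
    (n : ℝ) ^ a ≤ (n : ℝ) ^ b := by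
  rcases n.eq_zero_or_pos with rfl | hn
  · simp [Real.zero_rpow, ha.ne', (ha.trans_le hab).ne']
  · exact Real.rpow_le_rpow_of_exponent_le (Nat.one_le_cast.2 hn) hab

theorem additive_energy_parabola :
    ∀ ε > (0 : ℝ), ∃ C > (0 : ℝ),
      ∀ Λ : Set (ℝ × ℝ), Λ.Finite → Λ ⊆ parab1 →
        (energy 3 Λ : ℝ) ≤ C * (Λ.ncard : ℝ) ^ ((7 : ℝ) / 2 + ε) := by
  refine fun ε hε => ⟨504, by norm_num, fun Λ hfin hΛ => ?_⟩
  refine (additive_energy_parabola_general hfin fun v hv => (hΛ hv).2).trans ?_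
  exact mul_le_mul_of_nonneg_left
    (natCast_rpow_le_natCast_rpow _ (by norm_num) (by linarith)) (by norm_num)

end
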